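/- arXiv:2304.07906 — 2 statements merged into one kernel-verified Lean document; each statement's English description precedes it below -/
import Mathlib

section
/- Every maximal Sidon set in F_2^5 has cardinality 7, and is the image under some affine permutation of the set {0, e_1, e_2, e_3, e_4, e_5, e_1+e_2+e_3+e_4}, where e_1,...,e_5 is the standard basis of F_2^5. -/
/-- A subset `M` of `𝔽₂ᵗ` is Sidon if `m₁+m₂ ≠ m₃+m₄` for pairwise distinct elements. -/
def IsSidon {t : ℕ} (M : Finset (Fin t → ZMod 2)) : Prop :=
  ∀ m₁ ∈ M, ∀ m₂ ∈ M, ∀ m₃ ∈ M, ∀ m₄ ∈ M,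
    (m₁ ≠ m₂ ∧ m₁ ≠ m₃ ∧ m₁ ≠ m₄ ∧ m₂ ≠ m₃ ∧ m₂ ≠ m₄ ∧ m₃ ≠ m₄) →
    m₁ + m₂ ≠ m₃ + m₄

/-- `M` is sum-free if `m₁+m₂ ≠ m₃` for all `m₁,m₂,m₃ ∈ M`. -/
def IsSumFree {t : ℕ} (M : Finset (Fin t → ZMod 2)) : Prop :=
  ∀ m₁ ∈ M, ∀ m₂ ∈ M, ∀ m₃ ∈ M, m₁ + m₂ ≠ m₃

/-- A maximal Sidon set. -/
def IsMaximalSidon {t : ℕ} (M : Finset (Fin t → ZMod 2)) : Prop :=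
  IsSidon M ∧ ∀ S : Finset (Fin t → ZMod 2), IsSidon S → M ⊆ S → S = M

/-- Maximum size of a Sidon set in `𝔽₂ᵗ`. -/
noncomputable def sMax (t : ℕ) : ℕ :=
  sSup {n : ℕ | ∃ M : Finset (Fin t → ZMod 2), IsSidon M ∧ M.card = n}

/-- 2-sums of `M`. -/
def twoSums {t : ℕ} (M : Finset (Fin t → ZMod 2)) : Finset (Fin t → ZMod 2) :=
  (M ×ˢ M).image fun p => p.1 + p.2

/-- 2-star-sums of `M` (sums of two distinct elements). -/
def twoStarSums {t : ℕ} (M : Finset (Fin t → ZMod 2)) : Finset (Fin t → ZMod 2) :=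
  ((M ×ˢ M).filter fun p => p.1 ≠ p.2).image fun p => p.1 + p.2

/-- 3-sums of `M`. -/
def threeSums {t : ℕ} (M : Finset (Fin t → ZMod 2)) : Finset (Fin t → ZMod 2) :=
  ((M ×ˢ M) ×ˢ M).image fun p => p.1.1 + p.1.2 + p.2

/-- 3-star-sums of `M` (sums of three pairwise distinct elements). -/
def threeStarSums {t : ℕ} (M : Finset (Fin t → ZMod 2)) : Finset (Fin t → ZMod 2) :=
  (((M ×ˢ M) ×ˢ M).filter fun p => p.1.1 ≠ p.1.2 ∧ p.1.1 ≠ p.2 ∧ p.1.2 ≠ p.2).image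
    fun p => p.1.1 + p.1.2 + p.2

/-- 4-sums of `M`. -/
def fourSums {t : ℕ} (M : Finset (Fin t → ZMod 2)) : Finset (Fin t → ZMod 2) :=
  (((M ×ˢ M) ×ˢ M) ×ˢ M).image fun p => p.1.1.1 + p.1.1.2 + p.1.2 + p.2

/-- The standard basis vectors of `𝔽₂ᵗ`. -/
def stdBasis {t : ℕ} (i : Fin t) : Fin t → ZMod 2 := Pi.single i 1

abbrev V5 := Fin 5 → ZMod 2

def baseSet : Finset V5 :=
  {0, stdBasis 0, stdBasis 1, stdBasis 2, stdBasis 3, stdBasis 4}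

def modelSet : Finset V5 :=
  {0, stdBasis 0, stdBasis 1, stdBasis 2, stdBasis 3, stdBasis 4,
          stdBasis 0 + stdBasis 1 + stdBasis 2 + stdBasis 3}

instance decSidon {t : ℕ} (M : Finset (Fin t → ZMod 2)) : Decidable (IsSidon M) := by
  unfold IsSidon; infer_instance

lemma two_self (x : V5) : x + x = 0 := by
  funext i; exact CharTwo.add_self_eq_zero _

lemma sidon_image {M : Finset V5} (h : IsSidon M) (L : V5 ≃ₗ[ZMod 2] V5) (a : V5) :
    IsSidon (M.image fun x => L x + a) := by
  intro m1 h1 m2 h2 m3 h3 m4 h4 hne heq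
  simp only [Finset.mem_image] at h1 h2 h3 h4
  obtain ⟨x1, h1, rfl⟩ := h1
  obtain ⟨x2, h2, rfl⟩ := h2
  obtain ⟨x3, h3, rfl⟩ := h3
  obtain ⟨x4, h4, rfl⟩ := h4
  refine h x1 h1 x2 h2 x3 h3 x4 h4 ?_ ?_
  · obtain ⟨a1, a2, a3, a4, a5, a6⟩ := hne
    exact ⟨fun h => a1 (by rw [h]), fun h => a2 (by rw [h]), fun h => a3 (by rw [h]),
      fun h => a4 (by rw [h]), fun h => a5 (by rw [h]), fun h => a6 (by rw [h])⟩
  · apply L.injective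
    rw [map_add, map_add]
    have : L x1 + L x2 + (a + a) = L x3 + L x4 + (a + a) := by
      rw [add_add_add_comm, heq, add_add_add_comm]
    exact add_right_cancel this

lemma image_inv (M : Finset V5) (L : V5 ≃ₗ[ZMod 2] V5) (a : V5) :
    ((M.image fun x => L x + a).image fun x => L.symm x + L.symm a) = M := by
  rw [Finset.image_image]
  have e : ((fun x => L.symm x + L.symm a) ∘ fun x => L x + a) = id := by
    funext x
    simp only [Function.comp, map_add, LinearEquiv.symm_apply_apply, id]
    rw [add_assoc, two_self, add_zero]
  rw [e, Finset.image_id]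

lemma maximal_image {M : Finset V5} (h : IsMaximalSidon M) (L : V5 ≃ₗ[ZMod 2] V5) (a : V5) :
    IsMaximalSidon (M.image fun x => L x + a) := by
  refine ⟨sidon_image h.1 L a, fun S hS hMS => ?_⟩
  have h1 := h.2 (S.image fun x => L.symm x + L.symm a) (sidon_image hS _ _) (by
    conv_lhs => rw [← image_inv M L a]
    exact Finset.image_subset_image hMS)
  have h2 := image_inv S L.symm (L.symm a)
  rw [h1] at h2
  simpa using h2.symm

/-- Adding a point outside the sums of three points keeps the set Sidon. -/
lemma sidon_insert {M : Finset V5} (h : IsSidon M) (p : V5)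
    (hp : ∀ x ∈ M, ∀ y ∈ M, ∀ z ∈ M, x + y + z ≠ p) : IsSidon (insert p M) := by
  intro m1 h1 m2 h2 m3 h3 m4 h4 hne heq
  obtain ⟨a1, a2, a3, a4, a5, a6⟩ := hne
  have key : ∀ a b c d : V5, a + b = c + d → b + c + d = a := by
    intro a b c d h
    rw [add_assoc, ← h, add_comm a b, ← add_assoc, two_self, zero_add]
  rw [Finset.mem_insert] at h1 h2 h3 h4
  rcases h1 with rfl | h1
  · exact hp m2 (by grind) m3 (by grind) m4 (by grind) (key _ _ _ _ heq)
  rcases h2 with rfl | h2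
  · exact hp m1 (by grind) m3 (by grind) m4 (by grind) (key _ _ _ _ (by rw [add_comm, heq]))
  rcases h3 with rfl | h3
  · exact hp m4 (by grind) m1 (by grind) m2 (by grind) (key _ _ _ _ heq.symm)
  rcases h4 with rfl | h4
  · exact hp m3 (by grind) m1 (by grind) m2 (by grind) (key _ _ _ _ (by rw [add_comm, heq]))
  exact h m1 h1 m2 h2 m3 h3 m4 h4 ⟨a1, a2, a3, a4, a5, a6⟩ heq

lemma exists_mem {M : Finset V5} (h : IsMaximalSidon M) : ∃ a, a ∈ M := by
  by_contra hc
  push Not at hc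
  have hM : M = ∅ := Finset.eq_empty_of_forall_notMem hc
  subst hM
  have := h.2 (insert 0 ∅) (sidon_insert h.1 0 (by simp)) (by simp)
  simp at this

lemma exists_basis {M : Finset V5} (h : IsMaximalSidon M) :
    ∃ (a : V5) (b : Module.Basis (Fin 5) (ZMod 2) V5), a ∈ M ∧ ∀ i, b i + a ∈ M := by
  obtain ⟨a, ha⟩ := exists_mem h
  let s : Set V5 := {v | v + a ∈ M}
  have hs : Submodule.span (ZMod 2) s = ⊤ := by
    by_contra hne
    obtain ⟨q, hq⟩ : ∃ q, q ∉ Submodule.span (ZMod 2) s := by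
      by_contra hc
      push Not at hc
      exact hne (Submodule.eq_top_iff'.2 hc)
    have hmem : ∀ x ∈ M, x + a ∈ Submodule.span (ZMod 2) s := by
      intro x hx
      apply Submodule.subset_span
      change x + a + a ∈ M
      rwa [add_assoc, two_self, add_zero]
    have hS := h.2 (insert (q + a) M) (sidon_insert h.1 (q + a) (by
      intro x hx y hy z hz hxyz
      apply hq
      have e : q = (x + a) + (y + a) + (z + a) := by
        have h1 : (x + a) + (y + a) + (z + a) = (x + y + z) + a + (a + a) := by abel
        rw [h1, hxyz, two_self, add_zero, add_assoc, two_self, add_zero]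
      rw [e]
      exact Submodule.add_mem _ (Submodule.add_mem _ (hmem x hx) (hmem y hy)) (hmem z hz)))
      (Finset.subset_insert _ _)
    have hqM : q + a ∈ M := by rw [← hS]; exact Finset.mem_insert_self _ _
    exact hq (Submodule.subset_span hqM)
  let b0 := Module.Basis.ofSpan hs.ge
  have hb0 : ∀ i, b0 i ∈ s := fun i => Module.Basis.ofSpan_subset hs.ge ⟨i, rfl⟩
  have : Fintype (((linearIndepOn_empty (ZMod 2) id).extend (Set.empty_subset s) : Set V5)) :=
    Fintype.ofFinite _
  have hc := Module.finrank_eq_card_basis b0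
  rw [Module.finrank_fin_fun] at hc
  refine ⟨a, b0.reindex (Fintype.equivFinOfCardEq hc.symm), ha, fun i => ?_⟩
  rw [Module.Basis.reindex_apply]
  exact hb0 _

def shear : V5 ≃ₗ[ZMod 2] V5 where
  toFun x := fun i => if i = 4 then x 0 + x 1 + x 2 + x 3 + x 4 else x i
  invFun x := fun i => if i = 4 then x 0 + x 1 + x 2 + x 3 + x 4 else x i
  map_add' x y := by
    funext i; simp only [Pi.add_apply]; split_ifs
    · ring
    · rfl
  map_smul' c x := by
    funext i; simp only [Pi.smul_apply, smul_eq_mul, RingHom.id_apply]; split_ifs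
    · ring
    · rfl
  left_inv := by decide +kernel
  right_inv := by decide +kernel

def perm (j : Fin 5) : V5 ≃ₗ[ZMod 2] V5 :=
  LinearEquiv.funCongrLeft (ZMod 2) (ZMod 2) (Equiv.swap j 4)

def Bad (x : V5) : Prop := ∃ p ∈ baseSet, ∃ q ∈ baseSet, ∃ r ∈ baseSet,
  (p ≠ q ∧ p ≠ r ∧ p ≠ x ∧ q ≠ r ∧ q ≠ x ∧ r ≠ x) ∧ p + q = r + x

def BadPair (x y : V5) : Prop := ∃ p ∈ baseSet, ∃ q ∈ baseSet,
  (p ≠ q ∧ p ≠ x ∧ p ≠ y ∧ q ≠ x ∧ q ≠ y ∧ x ≠ y) ∧ p + q = x + y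

instance decBad (x : V5) : Decidable (Bad x) := by
  unfold Bad; infer_instance

instance decBadPair (x y : V5) : Decidable (BadPair x y) := by
  unfold BadPair; infer_instance

lemma class_pt : ∀ x : V5, x ∈ baseSet ∨
    Bad x ∨
    (∃ j, Finset.image (fun y => perm j y + 0) modelSet = insert x baseSet) ∨
    Finset.image (fun y => shear y + stdBasis 4) modelSet = insert x baseSet := by
  decide +kernel

lemma pair_pt : ∀ x y : V5, x = y ∨ x ∈ baseSet ∨ y ∈ baseSet ∨
    Bad x ∨
    Bad y ∨
    BadPair x y := by
  decide +kernel

lemma model_sidon : IsSidon modelSet := by decide +kernel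

lemma base_sub_model : baseSet ⊆ modelSet := by decide +kernel

lemma base_ne_model : modelSet ≠ baseSet := by decide +kernel

lemma model_card : modelSet.card = 7 := by decide +kernel

lemma normal_form {N : Finset V5} (h : IsMaximalSidon N) (hb : baseSet ⊆ N) :
    ∃ (L : V5 ≃ₗ[ZMod 2] V5) (a : V5), Finset.image (fun x => L x + a) modelSet = N := by
  obtain ⟨x, hxN, hx⟩ : ∃ x ∈ N, x ∉ baseSet := by
    by_contra hc
    push Not at hc
    have hN : baseSet = N := Finset.Subset.antisymm hb hc
    subst hN
    exact base_ne_model (h.2 _ model_sidon base_sub_model)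
  have h3 : ∀ x ∈ N, ¬ Bad x := by
    rintro x hx ⟨p, hp, q, hq, r, hr, hne, he⟩
    exact h.1 p (hb hp) q (hb hq) r (hb hr) x hx hne he
  have hN : insert x baseSet = N := by
    apply Finset.Subset.antisymm (Finset.insert_subset hxN hb)
    intro y hy
    rcases pair_pt x y with e | e | e | e | e | e
    · rw [← e]; exact Finset.mem_insert_self _ _
    · exact absurd e hx
    · exact Finset.mem_insert_of_mem e
    · exact absurd e (h3 x hxN)
    · exact absurd e (h3 y hy)
    · obtain ⟨p, hp, q, hq, hne, he⟩ := e
      exact absurd he (h.1 p (hb hp) q (hb hq) x hxN y hy hne)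
  rcases class_pt x with e | e | ⟨j, e⟩ | e
  · exact absurd e hx
  · exact absurd e (h3 x hxN)
  · exact ⟨perm j, 0, e.trans hN⟩
  · exact ⟨shear, stdBasis 4, e.trans hN⟩

lemma main_aux {M : Finset V5} (hM : IsMaximalSidon M) :
    ∃ (L : V5 ≃ₗ[ZMod 2] V5) (a : V5), Finset.image (fun x => L x + a) modelSet = M := by
  obtain ⟨a, b, ha, hb⟩ := exists_basis hM
  have hN := maximal_image hM b.equivFun (b.equivFun a)
  have hsub : baseSet ⊆ M.image fun x => b.equivFun x + b.equivFun a := by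
    have hi : ∀ i, stdBasis i ∈ M.image fun x => b.equivFun x + b.equivFun a := by
      intro i
      refine Finset.mem_image.2 ⟨_, hb i, ?_⟩
      rw [map_add, add_assoc, two_self, add_zero]
      funext k
      simp [stdBasis, Module.Basis.equivFun_self, Pi.single_apply, eq_comm]
    have h0 : (0 : V5) ∈ M.image fun x => b.equivFun x + b.equivFun a :=
      Finset.mem_image.2 ⟨a, ha, two_self _⟩
    intro x hx
    simp only [baseSet, Finset.mem_insert, Finset.mem_singleton] at hx
    rcases hx with rfl | rfl | rfl | rfl | rfl | rfl
    · exact h0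
    all_goals exact hi _
  obtain ⟨L, c, hL⟩ := normal_form hN hsub
  have hinv := image_inv M b.equivFun (b.equivFun a)
  rw [← hL, Finset.image_image] at hinv
  refine ⟨L.trans b.equivFun.symm, b.equivFun.symm c + a, ?_⟩
  rw [← hinv]
  congr 1
  funext x
  simp only [Function.comp, LinearEquiv.trans_apply, map_add, LinearEquiv.symm_apply_apply, add_assoc]

theorem maximal_sidon_dim5 (M : Finset (Fin 5 → ZMod 2)) (hM : IsMaximalSidon M) :
    M.card = 7 ∧
    ∃ (L : (Fin 5 → ZMod 2) ≃ₗ[ZMod 2] (Fin 5 → ZMod 2)) (a : Fin 5 → ZMod 2),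
      Finset.image (fun x => L x + a)
        ({0, stdBasis 0, stdBasis 1, stdBasis 2, stdBasis 3, stdBasis 4,
          stdBasis 0 + stdBasis 1 + stdBasis 2 + stdBasis 3} :
            Finset (Fin 5 → ZMod 2)) = M := by
  obtain ⟨L, a, h⟩ := main_aux hM
  refine ⟨?_, L, a, h⟩
  rw [← h, Finset.card_image_of_injective, model_card]
  intro x y hxy
  exact L.injective (add_right_cancel hxy)
end

section
/- Let M be a Sidon set in F_2^t with |M| > s_max(t−1). Then (a) the 4-sums 4Σ(M) equal all of F_2^t, and (b) dim span(M) = dim span(2Σ*(M)) = t. -/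
theorem le_sMax_aux {t : ℕ} (S : Finset (Fin t → ZMod 2)) (hS : IsSidon S) :
    S.card ≤ sMax t := by
  refine le_csSup ⟨Fintype.card (Fin t → ZMod 2), ?_⟩ ⟨S, hS, rfl⟩
  rintro n ⟨M, -, rfl⟩
  exact Finset.card_le_univ M

theorem add_self_aux {t : ℕ} (x : Fin t → ZMod 2) : x + x = 0 := by
  funext i
  exact CharTwo.add_self_eq_zero (x i)

theorem exists_map_aux {t : ℕ} (x : Fin t → ZMod 2) (hx : x ≠ 0) :
    ∃ f : (Fin t → ZMod 2) →ₗ[ZMod 2] (Fin (t - 1) → ZMod 2),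
      ∀ y, f y = 0 → y = 0 ∨ y = x := by
  have h1 := Submodule.finrank_quotient_add_finrank (Submodule.span (ZMod 2) {x})
  rw [finrank_span_singleton hx, Module.finrank_fin_fun] at h1
  have h2 : Module.finrank (ZMod 2) ((Fin t → ZMod 2) ⧸ Submodule.span (ZMod 2) {x}) =
      Module.finrank (ZMod 2) (Fin (t - 1) → ZMod 2) := by
    rw [Module.finrank_fin_fun]; omega
  let e := LinearEquiv.ofFinrankEq _ _ h2
  refine ⟨e.toLinearMap ∘ₗ Submodule.mkQ _, fun y hy => ?_⟩
  have hy' : (Submodule.span (ZMod 2) {x}).mkQ y = 0 := by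
    simpa using hy
  rw [Submodule.mkQ_apply, Submodule.Quotient.mk_eq_zero, Submodule.mem_span_singleton] at hy'
  obtain ⟨a, rfl⟩ := hy'
  have ha : ∀ a : ZMod 2, a = 0 ∨ a = 1 := by decide
  rcases ha a with rfl | rfl <;> simp

theorem mem_fourSums_aux {t : ℕ} {M : Finset (Fin t → ZMod 2)} {a b c d : Fin t → ZMod 2}
    (ha : a ∈ M) (hb : b ∈ M) (hc : c ∈ M) (hd : d ∈ M) : a + b + c + d ∈ fourSums M :=
  Finset.mem_image.2 ⟨(((a, b), c), d), by simp [ha, hb, hc, hd], rfl⟩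

theorem fourSums_eq_aux {t : ℕ} (M : Finset (Fin t → ZMod 2))
    (hM : IsSidon M) (hcard : sMax (t - 1) < M.card) : fourSums M = Finset.univ := by
  classical
  rw [Finset.eq_univ_iff_forall]
  intro x
  by_contra hx
  obtain ⟨m, hm⟩ := Finset.card_pos.1 (Nat.zero_lt_of_lt hcard)
  have hx0 : x ≠ 0 := by
    rintro rfl
    apply hx
    have := mem_fourSums_aux hm hm hm hm
    rwa [add_self_aux, zero_add, add_self_aux] at this
  obtain ⟨f, hf⟩ := exists_map_aux x hx0
  have hinj : Set.InjOn f M := by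
    intro a ha b hb hab
    have h0 : f (a + b) = 0 := by rw [map_add, hab, add_self_aux]
    rcases hf _ h0 with h | h
    · calc a = a + b + b := by rw [add_assoc, add_self_aux, add_zero]
        _ = b := by rw [h, zero_add]
    · exfalso
      apply hx
      have := mem_fourSums_aux ha hb hm hm
      rwa [add_assoc (a + b), add_self_aux, add_zero, h] at this
  have hS : IsSidon (M.image f) := by
    intro p hp q hq r hr s hs hne heq
    obtain ⟨a, ha, rfl⟩ := Finset.mem_image.1 hp
    obtain ⟨b, hb, rfl⟩ := Finset.mem_image.1 hq
    obtain ⟨c, hc, rfl⟩ := Finset.mem_image.1 hr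
    obtain ⟨d, hd, rfl⟩ := Finset.mem_image.1 hs
    obtain ⟨h1, h2, h3, h4, h5, h6⟩ := hne
    have h0 : f (a + b + c + d) = 0 := by
      rw [add_assoc (a + b), map_add, map_add, map_add, heq, add_self_aux]
    rcases hf _ h0 with h | h
    · refine hM a ha b hb c hc d hd ⟨ne_of_apply_ne f h1, ne_of_apply_ne f h2,
        ne_of_apply_ne f h3, ne_of_apply_ne f h4, ne_of_apply_ne f h5, ne_of_apply_ne f h6⟩ ?_
      calc a + b = a + b + c + d + (c + d) := by
            rw [add_assoc (a + b), add_assoc (a + b), add_self_aux, add_zero]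
        _ = c + d := by rw [h, zero_add]
    · exact hx (h ▸ mem_fourSums_aux ha hb hc hd)
  have := le_sMax_aux _ hS
  rw [Finset.card_image_of_injOn hinj] at this
  omega

theorem large_sidon_set_properties {t : ℕ} (M : Finset (Fin t → ZMod 2))
    (hM : IsSidon M) (hcard : sMax (t - 1) < M.card) :
    fourSums M = Finset.univ ∧
    Module.finrank (ZMod 2)
      (Submodule.span (ZMod 2) (M : Set (Fin t → ZMod 2))) = t ∧
    Module.finrank (ZMod 2)
      (Submodule.span (ZMod 2) ((twoStarSums M : Set (Fin t → ZMod 2)))) = t := by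
  have h4 := fourSums_eq_aux M hM hcard
  have key : ∀ W : Submodule (ZMod 2) (Fin t → ZMod 2),
      (∀ a ∈ M, ∀ b ∈ M, a + b ∈ W) → Module.finrank (ZMod 2) W = t := by
    intro W hW
    have : W = ⊤ := by
      rw [Submodule.eq_top_iff']
      intro x
      have hx : x ∈ fourSums M := h4 ▸ Finset.mem_univ x
      obtain ⟨⟨⟨⟨a, b⟩, c⟩, d⟩, hp, rfl⟩ := Finset.mem_image.1 hx
      simp only [Finset.mem_product] at hp
      obtain ⟨⟨⟨ha, hb⟩, hc⟩, hd⟩ := hp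
      show a + b + c + d ∈ W
      rw [add_assoc (a + b)]
      exact W.add_mem (hW a ha b hb) (hW c hc d hd)
    rw [this, finrank_top, Module.finrank_fin_fun]
  refine ⟨h4, key _ fun a ha b hb => ?_, key _ fun a ha b hb => ?_⟩
  · exact Submodule.add_mem _ (Submodule.subset_span ha) (Submodule.subset_span hb)
  · by_cases hab : a = b
    · rw [hab, add_self_aux]
      exact Submodule.zero_mem _
    · apply Submodule.subset_span
      exact Finset.mem_coe.2 (Finset.mem_image.2 ⟨(a, b), by simp [ha, hb, hab], rfl⟩)
end
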